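/- arXiv:1611.01523 — 2 statements merged into one kernel-verified Lean document; each statement's English description precedes it below -/
import Mathlib

section
/- Let A be a finite type with at least two elements and let n ≥ 4. Then the alternating group of (Fin n → A) equals the subgroup of Perm(Fin n → A) generated by the applications, along injections ι : Fin 4 ↪ Fin n, of even permutations of (Fin 4 → A). In words: the even permutations of A⁴ generate all even permutations of Aⁿ for all n ≥ 4. -/
/-- Extension of an operation on `m`-letter words to `n`-letter words along an
injection of coordinates: apply `F` on the coordinates selected by `ι`, leave
the rest unchanged. -/
noncomputable def extWord {A : Type*} {m n : ℕ} (ι : Fin m ↪ Fin n)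
    (F : (Fin m → A) → (Fin m → A)) (x : Fin n → A) : Fin n → A :=
  fun k => if h : ∃ j, ι j = k then F (x ∘ ι) h.choose else x k

theorem extWord_comp {A : Type*} {m n : ℕ} (ι : Fin m ↪ Fin n)
    (F : (Fin m → A) → (Fin m → A)) (x : Fin n → A) :
    (extWord ι F x) ∘ ι = F (x ∘ ι) := by
  funext j
  have h : ∃ j', ι j' = ι j := ⟨j, rfl⟩
  simp only [Function.comp_apply, extWord, dif_pos h]
  congr 1
  exact ι.injective h.choose_spec

/-- The application of a gate `f` of arity `m` along an injection `ι : Fin m ↪ Fin n`: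
the resulting permutation `g` of words of length `n` satisfies
`(g x) (ι j) = (f (x ∘ ι)) j` for all `j : Fin m`, and `g x k = x k` for every
coordinate `k` outside the range of `ι`. -/
noncomputable def applyAlong {A : Type*} {m n : ℕ} (f : Equiv.Perm (Fin m → A))
    (ι : Fin m ↪ Fin n) : Equiv.Perm (Fin n → A) where
  toFun := extWord ι f
  invFun := extWord ι f.symm
  left_inv x := by
    funext k
    by_cases h : ∃ j, ι j = k
    · obtain ⟨j, rfl⟩ := h
      have hj : extWord ι (⇑f.symm) (extWord ι (⇑f) x) (ι j)
          = ((extWord ι (⇑f.symm) (extWord ι (⇑f) x)) ∘ ι) j := rfl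
      rw [hj, extWord_comp, extWord_comp]
      simp
    · simp only [extWord, dif_neg h]
  right_inv x := by
    funext k
    by_cases h : ∃ j, ι j = k
    · obtain ⟨j, rfl⟩ := h
      have hj : extWord ι (⇑f) (extWord ι (⇑f.symm) x) (ι j)
          = ((extWord ι (⇑f) (extWord ι (⇑f.symm) x)) ∘ ι) j := rfl
      rw [hj, extWord_comp, extWord_comp]
      simp
    · simp only [extWord, dif_neg h]


theorem applyAlong_comp {A : Type*} {m n : ℕ} (f : Equiv.Perm (Fin m → A))
    (ι : Fin m ↪ Fin n) (x : Fin n → A) : (applyAlong f ι x) ∘ ι = f (x ∘ ι) :=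
  extWord_comp ι f x

theorem applyAlong_apply {A : Type*} {m n : ℕ} (f : Equiv.Perm (Fin m → A))
    (ι : Fin m ↪ Fin n) (x : Fin n → A) (j : Fin m) :
    applyAlong f ι x (ι j) = f (x ∘ ι) j :=
  congrFun (applyAlong_comp f ι x) j

theorem applyAlong_off {A : Type*} {m n : ℕ} (f : Equiv.Perm (Fin m → A))
    (ι : Fin m ↪ Fin n) (x : Fin n → A) (k : Fin n) (h : ¬ ∃ j, ι j = k) :
    applyAlong f ι x k = x k := by
  change extWord ι f x k = x k
  simp only [extWord, dif_neg h]

theorem applyAlong_unique {A : Type*} {m n : ℕ} (f : Equiv.Perm (Fin m → A))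
    (ι : Fin m ↪ Fin n) (x y : Fin n → A) (h1 : y ∘ ι = f (x ∘ ι))
    (h2 : ∀ k, (¬ ∃ j, ι j = k) → y k = x k) : applyAlong f ι x = y := by
  funext k
  by_cases h : ∃ j, ι j = k
  · obtain ⟨j, rfl⟩ := h
    rw [applyAlong_apply, ← h1]; rfl
  · rw [applyAlong_off _ _ _ _ h, h2 k h]

theorem applyAlong_mul {A : Type*} {m n : ℕ} (f g : Equiv.Perm (Fin m → A))
    (ι : Fin m ↪ Fin n) : applyAlong (f * g) ι = applyAlong f ι * applyAlong g ι := by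
  ext1 x
  apply applyAlong_unique
  · rw [Equiv.Perm.mul_apply, applyAlong_comp, applyAlong_comp]; rfl
  · intro k hk
    rw [Equiv.Perm.mul_apply, applyAlong_off _ _ _ _ hk, applyAlong_off _ _ _ _ hk]

/-- Application along `ι` as a group homomorphism. -/
noncomputable def applyHom {A : Type*} {m n : ℕ} (ι : Fin m ↪ Fin n) :
    Equiv.Perm (Fin m → A) →* Equiv.Perm (Fin n → A) :=
  MonoidHom.mk' (fun f => applyAlong f ι) (fun f g => applyAlong_mul f g ι)

theorem applyAlong_trans {A : Type*} {l m n : ℕ} (f : Equiv.Perm (Fin l → A))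
    (κ : Fin l ↪ Fin m) (ι : Fin m ↪ Fin n) :
    applyAlong (applyAlong f κ) ι = applyAlong f (κ.trans ι) := by
  ext1 x
  symm
  apply applyAlong_unique
  · have : (applyAlong (applyAlong f κ) ι x) ∘ (κ.trans ι)
        = ((applyAlong (applyAlong f κ) ι x) ∘ ι) ∘ κ := rfl
    rw [this, applyAlong_comp, applyAlong_comp]; rfl
  · intro k hk
    by_cases h : ∃ j, ι j = k
    · obtain ⟨j, rfl⟩ := h
      rw [applyAlong_apply, applyAlong_off]
      · rfl
      · rintro ⟨i, rfl⟩
        exact hk ⟨i, rfl⟩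
    · rw [applyAlong_off _ _ _ _ h]

theorem applyAlong_refl {A : Type*} {m : ℕ} (f : Equiv.Perm (Fin m → A)) :
    applyAlong f (Function.Embedding.refl _) = f := by
  ext1 x
  apply applyAlong_unique
  · rfl
  · intro k hk
    exact absurd ⟨k, rfl⟩ hk

theorem applyAlong_even {A : Type*} [Fintype A] [DecidableEq A] {m n : ℕ}
    (ι : Fin m ↪ Fin n) (f : Equiv.Perm (Fin m → A)) (hf : f ∈ alternatingGroup (Fin m → A)) :
    applyAlong f ι ∈ alternatingGroup (Fin n → A) := by
  have key : alternatingGroup (Fin m → A)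
      ≤ (alternatingGroup (Fin n → A)).comap (applyHom ι) := by
    rw [← Equiv.Perm.closure_three_cycles_eq_alternating, Subgroup.closure_le]
    intro g hg
    have h3 : g ^ 3 = 1 := by
      rw [← hg.orderOf]; exact pow_orderOf_eq_one g
    rw [SetLike.mem_coe, Subgroup.mem_comap, Equiv.Perm.mem_alternatingGroup]
    have h4 : (Equiv.Perm.sign (applyHom ι g)) ^ 3 = 1 := by
      rw [← map_pow, ← map_pow, h3, map_one, map_one]
    rcases Int.units_eq_one_or (Equiv.Perm.sign (applyHom ι g)) with h | h
    · exact h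
    · rw [h] at h4; exact absurd h4 (by decide)
  exact key hf

/-- Two permutations whose supports meet in one point have a 3-cycle as commutator. -/
theorem commutator_threeCycle {X : Type*} [Fintype X] [DecidableEq X] (f g : Equiv.Perm X) (p : X)
    (hf : f p ≠ p) (hg : g p ≠ p) (h : ∀ x, f x ≠ x → g x ≠ x → x = p) :
    (f * g * f⁻¹ * g⁻¹).IsThreeCycle := by
  have hgq : g (f p) = f p := by
    by_contra hc
    exact hf (h _ (fun e => hf (f.injective e)) hc)
  have hfr : f (g p) = g p := by
    by_contra hc
    exact hg (h _ hc (fun e => hg (g.injective e)))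
  have hqr : f p ≠ g p := by
    intro e
    rw [← e] at hfr
    exact hf (f.injective hfr)
  have hc : f * g * f⁻¹ * g⁻¹ = Equiv.swap (f p) p * Equiv.swap (f p) (g p) := by
    suffices hs : f * g = Equiv.swap (f p) p * Equiv.swap (f p) (g p) * (g * f) by
      rw [hs]; group
    ext1 x
    simp only [Equiv.Perm.mul_apply]
    by_cases hx : f x = x
    · by_cases hy : g x = x
      · have h1 : x ≠ p := by rintro rfl; exact hf hx
        have h2 : x ≠ f p := by rintro rfl; exact hf (f.injective hx)
        have h3 : x ≠ g p := by rintro rfl; exact hg (g.injective hy)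
        rw [hy, hx, hy, Equiv.swap_apply_of_ne_of_ne h2 h3, Equiv.swap_apply_of_ne_of_ne h2 h1]
      · rw [hx]
        have h1 : x ≠ p := by rintro rfl; exact hf hx
        by_cases hz : g x = p
        · rw [hz, Equiv.swap_apply_of_ne_of_ne hf.symm hg.symm, Equiv.swap_apply_right]
        · have h4 : f (g x) = g x := by
            by_contra hc
            exact hz (h _ hc (fun e => hy (g.injective e)))
          have h2 : g x ≠ f p := fun e => hz (f.injective (by rw [h4, e]))
          have h3 : g x ≠ g p := fun e => h1 (g.injective e)
          rw [h4, Equiv.swap_apply_of_ne_of_ne h2 h3, Equiv.swap_apply_of_ne_of_ne h2 hz]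
    · by_cases hy : g x = x
      · have h1 : x ≠ p := by rintro rfl; exact hg hy
        rw [hy]
        by_cases hz : f x = p
        · rw [hz, Equiv.swap_apply_right, Equiv.swap_apply_left]
        · have h4 : g (f x) = f x := by
            by_contra hc
            exact hz (h _ (fun e => hx (f.injective e)) hc)
          have h2 : f x ≠ g p := fun e => hz (g.injective (by rw [h4, e]))
          have h3 : f x ≠ f p := fun e => h1 (f.injective e)
          rw [h4, Equiv.swap_apply_of_ne_of_ne h3 h2, Equiv.swap_apply_of_ne_of_ne h3 hz]
      · obtain rfl := h x hx hy
        rw [hfr, hgq, Equiv.swap_apply_left,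
          Equiv.swap_apply_of_ne_of_ne hqr.symm hg]
  rw [hc]
  exact Equiv.Perm.isThreeCycle_swap_mul_swap_same hf hqr hg.symm

theorem swap_swap_ne {X : Type*} [DecidableEq X] {a b c x : X}
    (h : (Equiv.swap a b * Equiv.swap a c) x ≠ x) : x = a ∨ x = b ∨ x = c := by
  by_contra! hc
  apply h
  rw [Equiv.Perm.mul_apply, Equiv.swap_apply_of_ne_of_ne hc.1 hc.2.2,
    Equiv.swap_apply_of_ne_of_ne hc.1 hc.2.1]

theorem swap_swap_first {X : Type*} [DecidableEq X] {a b c : X} (hac : a ≠ c) (hbc : b ≠ c) :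
    (Equiv.swap a b * Equiv.swap a c) a ≠ a := by
  rw [Equiv.Perm.mul_apply, Equiv.swap_apply_left, Equiv.swap_apply_of_ne_of_ne hac.symm hbc.symm]
  exact hac.symm

theorem exists_threeCycle {A : Type*} [Fintype A] [DecidableEq A] (a b : A) (hab : a ≠ b)
    (k : ℕ) (G : Subgroup (Equiv.Perm (Fin (k + 4 + 1) → A)))
    (hG : ∀ (f : Equiv.Perm (Fin (k + 4) → A)) (ι : Fin (k + 4) ↪ Fin (k + 4 + 1)),
      f ∈ alternatingGroup (Fin (k + 4) → A) → applyAlong f ι ∈ G) :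
    ∃ g ∈ G, g.IsThreeCycle := by
  let u1 : Fin (k + 4) → A := fun _ => a
  let u2 : Fin (k + 4) → A := fun _ => b
  let u3 : Fin (k + 4) → A := fun i => if i = 0 then a else b
  let v2 : Fin (k + 4) → A := fun i => if i = 0 then b else a
  let v3 : Fin (k + 4) → A := fun i => if i = 0 ∨ i = Fin.last _ then b else a
  have hu12 : u1 ≠ u2 := fun e => hab (congrFun e 0)
  have hu13 : u1 ≠ u3 := fun e => hab (by simpa [u1, u3] using congrFun e 1)
  have hu23 : u2 ≠ u3 := fun e => hab (by simpa [u2, u3] using (congrFun e 0).symm)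
  have hv12 : u1 ≠ v2 := fun e => hab (by simpa [u1, v2] using congrFun e 0)
  have hv13 : u1 ≠ v3 := fun e => hab (by simpa [u1, v3] using congrFun e 0)
  have hv23 : v2 ≠ v3 := fun e => hab (by
    simpa [v2, v3] using (congrFun e (Fin.last _)))
  let F := applyAlong (Equiv.swap u1 u2 * Equiv.swap u1 u3) (Fin.castSuccEmb (n := k + 4))
  let H := applyAlong (Equiv.swap u1 v2 * Equiv.swap u1 v3) (Fin.succEmb (k + 4))
  have hF : F ∈ G := hG _ _
    (Equiv.Perm.isThreeCycle_swap_mul_swap_same hu12 hu13 hu23).mem_alternatingGroup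
  have hH : H ∈ G := hG _ _
    (Equiv.Perm.isThreeCycle_swap_mul_swap_same hv12 hv13 hv23).mem_alternatingGroup
  refine ⟨F * H * F⁻¹ * H⁻¹, G.mul_mem (G.mul_mem (G.mul_mem hF hH) (G.inv_mem hF))
    (G.inv_mem hH), commutator_threeCycle F H (fun _ => a) ?_ ?_ ?_⟩
  · intro e
    apply swap_swap_first (b := u2) hu13 hu23
    have := applyAlong_comp (Equiv.swap u1 u2 * Equiv.swap u1 u3) (Fin.castSuccEmb (n := k + 4))
      (fun _ => a)
    change F _ ∘ _ = _ at this
    rw [e] at this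
    exact this.symm
  · intro e
    apply swap_swap_first (b := v2) hv13 hv23
    have := applyAlong_comp (Equiv.swap u1 v2 * Equiv.swap u1 v3) (Fin.succEmb (k + 4))
      (fun _ => a)
    change H _ ∘ _ = _ at this
    rw [e] at this
    exact this.symm
  · intro x h1 h2
    have h1' : x ∘ (Fin.castSuccEmb (n := k + 4)) = u1 ∨ x ∘ (Fin.castSuccEmb (n := k + 4)) = u2
        ∨ x ∘ (Fin.castSuccEmb (n := k + 4)) = u3 := by
      apply swap_swap_ne
      intro e
      exact h1 (applyAlong_unique _ _ _ _ e.symm (fun _ _ => rfl))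
    have h2' : x ∘ (Fin.succEmb (k + 4)) = u1 ∨ x ∘ (Fin.succEmb (k + 4)) = v2
        ∨ x ∘ (Fin.succEmb (k + 4)) = v3 := by
      apply swap_swap_ne
      intro e
      exact h2 (applyAlong_unique _ _ _ _ e.symm (fun _ _ => rfl))
    have e1 : x (Fin.succ 1) = a := by
      have hl : (1 : Fin (k + 4)) ≠ Fin.last _ := by
        intro e; simpa using congrArg Fin.val e
      rcases h2' with h | h | h <;> simpa [u1, v2, v3, hl] using congrFun h 1
    have e2 : (Fin.succ 1 : Fin (k + 4 + 1)) = Fin.castSucc 2 := by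
      ext
      simp [Nat.mod_eq_of_lt (show 2 < k + 4 + 1 by omega), Nat.mod_eq_of_lt (show 2 < k + 4 by omega)]
    have h20 : (2 : Fin (k + 4)) ≠ 0 := by
      intro e
      simpa [Nat.mod_eq_of_lt (show 2 < k + 4 by omega)] using congrArg Fin.val e
    have hu : x ∘ (Fin.castSuccEmb (n := k + 4)) = u1 := by
      rw [e2] at e1
      rcases h1' with h | h | h
      · exact h
      · exact absurd (e1.symm.trans (congrFun h 2)) hab
      · exact absurd (e1.symm.trans ((congrFun h 2).trans (by simp [u3, h20]))) hab
    have e3 : x (Fin.succ 0) = a := congrFun hu 1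
    have hv : x ∘ (Fin.succEmb (k + 4)) = u1 := by
      rcases h2' with h | h | h
      · exact h
      · exact absurd (e3.symm.trans ((congrFun h 0).trans (by simp [v2]))) hab
      · exact absurd (e3.symm.trans ((congrFun h 0).trans (by simp [v3]))) hab
    funext i
    refine Fin.cases ?_ (fun j => ?_) i
    · exact congrFun hu 0
    · exact congrFun hv j

theorem alt_two_trans {X : Type*} [Fintype X] [DecidableEq X] (hX : 4 ≤ Nat.card X)
    {x y p q : X} (h : x ≠ y) (h' : p ≠ q) :
    ∃ f ∈ alternatingGroup X, f x = p ∧ f y = q := by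
  have := alternatingGroup.isMultiplyPretransitive X
  have h2 : MulAction.IsMultiplyPretransitive (alternatingGroup X) X 2 :=
    MulAction.isMultiplyPretransitive_of_le (n := Nat.card X - 2) (by omega) (Nat.sub_le _ _)
  rw [MulAction.is_two_pretransitive_iff] at h2
  obtain ⟨g, h1, h3⟩ := h2 h h'
  exact ⟨g, g.2, h1, h3⟩

theorem two_trans_step {A : Type*} [Fintype A] [DecidableEq A] (a b : A) (hab : a ≠ b)
    (k : ℕ) (G : Subgroup (Equiv.Perm (Fin (k + 4 + 1) → A)))
    (hG : ∀ (f : Equiv.Perm (Fin (k + 4) → A)) (ι : Fin (k + 4) ↪ Fin (k + 4 + 1)),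
      f ∈ alternatingGroup (Fin (k + 4) → A) → applyAlong f ι ∈ G)
    (x y : Fin (k + 4 + 1) → A) (i j : Fin (k + 4 + 1)) (hij : i ≠ j) (hxy : x i ≠ y i) :
    ∃ g ∈ G, (∀ l, l ≠ j → g x l = a ∧ g y l = b) ∧ g x j = x j ∧ g y j = y j := by
  have hc : 4 ≤ Nat.card (Fin (k + 4) → A) := by
    have h2 : 2 ≤ Fintype.card A := Fintype.one_lt_card_iff.2 ⟨a, b, hab⟩
    rw [Nat.card_eq_fintype_card, Fintype.card_fun, Fintype.card_fin]
    calc 4 ≤ 2 ^ 4 := by norm_num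
      _ ≤ 2 ^ (k + 4) := Nat.pow_le_pow_right (by norm_num) (by omega)
      _ ≤ _ := Nat.pow_le_pow_left h2 _
  obtain ⟨i', rfl⟩ := Fin.exists_succAbove_eq hij
  have hne : x ∘ j.succAboveEmb ≠ y ∘ j.succAboveEmb := fun e => hxy (congrFun e i')
  have hne' : (fun _ => a : Fin (k + 4) → A) ≠ fun _ => b := fun e => hab (congrFun e 0)
  obtain ⟨f, hf, h1, h2⟩ := alt_two_trans hc hne hne'
  have hj : ¬ ∃ l, j.succAboveEmb l = j := by
    rintro ⟨l, hl⟩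
    exact Fin.succAbove_ne j l hl
  refine ⟨applyAlong f j.succAboveEmb, hG _ _ hf, ?_, applyAlong_off _ _ _ _ hj,
    applyAlong_off _ _ _ _ hj⟩
  intro l hl
  obtain ⟨l', rfl⟩ := Fin.exists_succAbove_eq hl
  have e1 := applyAlong_apply f j.succAboveEmb x l'
  have e2 := applyAlong_apply f j.succAboveEmb y l'
  rw [h1] at e1
  rw [h2] at e2
  exact ⟨e1, e2⟩

theorem two_trans_canon {A : Type*} [Fintype A] [DecidableEq A] (a b : A) (hab : a ≠ b)
    (k : ℕ) (G : Subgroup (Equiv.Perm (Fin (k + 4 + 1) → A)))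
    (hG : ∀ (f : Equiv.Perm (Fin (k + 4) → A)) (ι : Fin (k + 4) ↪ Fin (k + 4 + 1)),
      f ∈ alternatingGroup (Fin (k + 4) → A) → applyAlong f ι ∈ G)
    (x y : Fin (k + 4 + 1) → A) (hxy : x ≠ y) :
    ∃ g ∈ G, g x = (fun _ => a) ∧ g y = (fun _ => b) := by
  obtain ⟨i, hi⟩ := Function.ne_iff.1 hxy
  obtain ⟨j, hj⟩ := exists_ne i
  obtain ⟨g, hg, h1, -, -⟩ := two_trans_step a b hab k G hG x y i j hj.symm hi
  have hi' : g x i ≠ g y i := by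
    rw [(h1 i hj.symm).1, (h1 i hj.symm).2]; exact hab
  -- a third coordinate, to be left untouched
  obtain ⟨l, hl⟩ : ∃ l : Fin (k + 4 + 1), l ∉ ({i, j} : Finset (Fin (k + 4 + 1))) := by
    by_contra! hc
    have h5 : Fintype.card (Fin (k + 4 + 1)) ≤ ({i, j} : Finset (Fin (k + 4 + 1))).card :=
      Finset.card_le_card (fun z _ => hc z)
    have h6 := Finset.card_le_two (a := i) (b := j)
    rw [Fintype.card_fin] at h5
    omega
  have hli : i ≠ l := by rintro rfl; simp at hl
  have hlj : l ≠ j := by rintro rfl; simp at hl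
  obtain ⟨g', hg', h2, h3, h4⟩ := two_trans_step a b hab k G hG (g x) (g y) i l hli hi'
  refine ⟨g' * g, G.mul_mem hg' hg, ?_, ?_⟩
  · funext z
    by_cases hz : z = l
    · subst hz; exact h3.trans (h1 z hlj).1
    · exact (h2 z hz).1
  · funext z
    by_cases hz : z = l
    · subst hz; exact h4.trans (h1 z hlj).2
    · exact (h2 z hz).2

theorem alt_le_of_gates {A : Type*} [Fintype A] [DecidableEq A] (a b : A) (hab : a ≠ b)
    (k : ℕ) (G : Subgroup (Equiv.Perm (Fin (k + 4 + 1) → A)))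
    (hG : ∀ (f : Equiv.Perm (Fin (k + 4) → A)) (ι : Fin (k + 4) ↪ Fin (k + 4 + 1)),
      f ∈ alternatingGroup (Fin (k + 4) → A) → applyAlong f ι ∈ G) :
    alternatingGroup (Fin (k + 4 + 1) → A) ≤ G := by
  obtain ⟨c, hc, h3⟩ := exists_threeCycle a b hab k G hG
  refine Equiv.Perm.alternatingGroup_le_of_isPreprimitive_of_isThreeCycle_mem
    (MulAction.isPreprimitive_of_is_two_pretransitive ?_) h3 hc
  rw [MulAction.is_two_pretransitive_iff]
  intro x y z w hxy hzw
  obtain ⟨g, hg, h1, h2⟩ := two_trans_canon a b hab k G hG x y hxy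
  obtain ⟨g', hg', h1', h2'⟩ := two_trans_canon a b hab k G hG z w hzw
  refine ⟨⟨g'⁻¹ * g, G.mul_mem (G.inv_mem hg') hg⟩, ?_, ?_⟩
  · change g'⁻¹ (g x) = z
    rw [h1, ← h1']
    exact g'.symm_apply_apply _
  · change g'⁻¹ (g y) = w
    rw [h2, ← h2']
    exact g'.symm_apply_apply _

/-- **Even 4-ary gates generate all even gates** (Theorem 10 of the paper).
Let `A` be a finite type with at least two elements and `n ≥ 4`.  The alternating group
of `Fin n → A` equals the subgroup of `Perm (Fin n → A)` generated by the applications,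
along injections `ι : Fin 4 ↪ Fin n`, of even permutations of `Fin 4 → A`. -/
theorem even_fourAry_gates_generate_alternating
    {A : Type*} [Fintype A] [DecidableEq A] (hA : 1 < Fintype.card A)
    (n : ℕ) (hn : 4 ≤ n) :
    Subgroup.closure
        {σ : Equiv.Perm (Fin n → A) |
          ∃ (f : Equiv.Perm (Fin 4 → A)) (ι : Fin 4 ↪ Fin n),
            f ∈ alternatingGroup (Fin 4 → A) ∧ σ = applyAlong f ι} =
      alternatingGroup (Fin n → A) := by
  apply le_antisymm
  · rw [Subgroup.closure_le]
    rintro σ ⟨f, ι, hf, rfl⟩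
    exact applyAlong_even ι f hf
  · obtain ⟨a, b, hab⟩ := Fintype.one_lt_card_iff.1 hA
    obtain ⟨k, rfl⟩ := Nat.exists_eq_add_of_le' hn
    clear hn
    induction k with
    | zero =>
      intro f hf
      exact Subgroup.subset_closure
        ⟨f, Function.Embedding.refl _, hf, (applyAlong_refl f).symm⟩
    | succ k ih =>
      have hk : k + 1 + 4 = k + 4 + 1 := by omega
      rw [hk]
      apply alt_le_of_gates a b hab k
      intro f ι hf
      have hf' := ih hf
      have hle : Subgroup.closure
          {σ : Equiv.Perm (Fin (k + 4) → A) |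
            ∃ (f : Equiv.Perm (Fin 4 → A)) (ι : Fin 4 ↪ Fin (k + 4)),
              f ∈ alternatingGroup (Fin 4 → A) ∧ σ = applyAlong f ι} ≤
          (Subgroup.closure
          {σ : Equiv.Perm (Fin (k + 4 + 1) → A) |
            ∃ (f : Equiv.Perm (Fin 4 → A)) (ι : Fin 4 ↪ Fin (k + 4 + 1)),
              f ∈ alternatingGroup (Fin 4 → A) ∧ σ = applyAlong f ι}).comap (applyHom ι) := by
        rw [Subgroup.closure_le]
        rintro _ ⟨g, κ, hg, rfl⟩
        exact Subgroup.subset_closure ⟨g, κ.trans ι, hg, applyAlong_trans g κ ι⟩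
      exact hle hf'
end

section
/- Let A be a finite type with at least two elements. For every finite family g₁, …, g_N of conservative gates, where gᵢ is a conservative permutation of (Fin mᵢ → A), there exist n ∈ ℕ and a conservative permutation f of (Fin n → A) such that for every k ≥ 0, the permutation f ⊕ id_k of (Fin (n+k) → A) — acting as f on the first n coordinates and fixing the remaining k coordinates — does not belong to the subgroup of Perm(Fin (n+k) → A) generated by the applications of the gates gᵢ along injections Fin mᵢ ↪ Fin (n+k). In words: the conservative revital is not finitely generated, even allowing arbitrarily many borrowed symbols. -/
/-- The weight of a word `x : Fin n → A` is the multiset of its entries. -/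
def wordWeight {A : Type*} {n : ℕ} (x : Fin n → A) : Multiset A :=
  Multiset.map x Finset.univ.val

/-- A permutation of words is *conservative* if it preserves the weight of every word. -/
def IsConservative {A : Type*} {n : ℕ} (f : Equiv.Perm (Fin n → A)) : Prop :=
  ∀ x : Fin n → A, wordWeight (f x) = wordWeight x

set_option linter.unusedSectionVars false

namespace ConsNFG

open Polynomial Equiv

/-- Additive parity of a sign, in `𝔽₂[X]`. -/
noncomputable def par (u : ℤˣ) : (ZMod 2)[X] := if u = 1 then 0 else 1

lemma two_zero : (1 : (ZMod 2)[X]) + 1 = 0 := CharTwo.add_self_eq_zero 1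

lemma par_one : par 1 = 0 := by simp [par]

lemma par_neg_one : par (-1) = 1 := by
  have : (-1 : ℤˣ) ≠ 1 := by decide
  simp [par, this]

lemma par_mul (u v : ℤˣ) : par (u * v) = par u + par v := by
  rcases Int.units_eq_one_or u with rfl | rfl <;> rcases Int.units_eq_one_or v with rfl | rfl <;>
    simp [par_one, par_neg_one, two_zero]

lemma par_prod {ι : Type*} (s : Finset ι) (f : ι → ℤˣ) :
    par (∏ i ∈ s, f i) = ∑ i ∈ s, par (f i) := by
  classical
  induction s using Finset.induction_on with
  | empty => simp [par_one]
  | insert a s ha ih => rw [Finset.prod_insert ha, Finset.sum_insert ha, par_mul, ih]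

open Classical in
/-- The part of `F` acting on the class `w = c`. -/
noncomputable def cut {Z W : Type*} (w : Z → W) (F : Perm Z) (c : W) : Perm Z :=
  if h : ∀ x, w (F x) = c ↔ w x = c then
    Perm.ofSubtype (p := fun x => w x = c) (F.subtypePerm h) else 1

open Classical in
lemma cut_apply {Z W : Type*} (w : Z → W) (F : Perm Z) (hF : ∀ x, w (F x) = w x) (c : W) (x : Z) :
    cut w F c x = if w x = c then F x else x := by
  have h : ∀ x, w (F x) = c ↔ w x = c := fun x => by rw [hF]
  unfold cut
  rw [dif_pos h]
  split_ifs with hx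
  · rw [Perm.ofSubtype_apply_of_mem (p := fun x => w x = c) _ hx]; rfl
  · rw [Perm.ofSubtype_apply_of_not_mem (p := fun x => w x = c) _ hx]

lemma cut_mul {Z W : Type*} (w : Z → W) (F G : Perm Z) (hF : ∀ x, w (F x) = w x)
    (hG : ∀ x, w (G x) = w x) (c : W) : cut w (F * G) c = cut w F c * cut w G c := by
  classical
  ext x
  rw [Perm.mul_apply, cut_apply w _ hG, cut_apply w (F * G) (fun x => by simp [hF, hG]),
    cut_apply w _ hF]
  by_cases h : w x = c <;> simp [h, hG]

lemma cut_one {Z W : Type*} (w : Z → W) (c : W) : cut w 1 c = 1 := by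
  classical
  ext x
  rw [cut_apply w 1 (fun x => rfl)]
  simp

section

variable {A : Type*} [Fintype A] [DecidableEq A]

/-- Weight of a word over an arbitrary finite index type. -/
def wt {I : Type*} [Fintype I] (x : I → A) : Multiset A := Multiset.map x Finset.univ.val

/-- The generating function weight of a multiset. -/
noncomputable def phi (q : A → (ZMod 2)[X]) (c : Multiset A) : (ZMod 2)[X] := (c.map q).prod

lemma phi_add (q : A → (ZMod 2)[X]) (c d : Multiset A) : phi q (c + d) = phi q c * phi q d := by
  simp [phi]

lemma phi_wt {I : Type*} [Fintype I] (q : A → (ZMod 2)[X]) (x : I → A) :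
    phi q (wt x) = ∏ i, q (x i) := by
  simp only [phi, wt, Multiset.map_map]
  rfl

lemma sum_phi_wt {I : Type*} [Fintype I] [DecidableEq I] (q : A → (ZMod 2)[X]) :
    ∑ x : I → A, phi q (wt x) = (∑ a, q a) ^ Fintype.card I := by
  simp_rw [phi_wt]
  have := Finset.prod_univ_sum (fun _ : I => (Finset.univ : Finset A)) (fun _ a => q a)
  rw [Fintype.piFinset_univ] at this
  rw [← this]
  simp

/-- The invariant: generating function of the parities on the weight classes. -/
noncomputable def chi {n : ℕ} (q : A → (ZMod 2)[X]) (F : Perm (Fin n → A)) : (ZMod 2)[X] :=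
  ∑ c ∈ Finset.univ.image (wordWeight : (Fin n → A) → Multiset A),
    par (Perm.sign (cut wordWeight F c)) * phi q c

lemma chi_one {n : ℕ} (q : A → (ZMod 2)[X]) : chi q (1 : Perm (Fin n → A)) = 0 := by
  simp [chi, cut_one, par_one]

lemma chi_mul {n : ℕ} (q : A → (ZMod 2)[X]) (F G : Perm (Fin n → A)) (hF : IsConservative F)
    (hG : IsConservative G) : chi q (F * G) = chi q F + chi q G := by
  simp only [chi, cut_mul _ F G hF hG, Perm.sign_mul, par_mul, add_mul, Finset.sum_add_distrib]

lemma chi_swap {n : ℕ} (q : A → (ZMod 2)[X]) (u v : Fin n → A) (huv : u ≠ v)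
    (h : wordWeight u = wordWeight v) :
    IsConservative (swap u v) ∧ chi q (swap u v) = phi q (wordWeight u) := by
  have hc : IsConservative (swap u v) := by
    intro x
    rw [swap_apply_def]
    split_ifs with h1 h2
    · rw [h1, h]
    · rw [h2, h]
    · rfl
  refine ⟨hc, ?_⟩
  unfold chi
  rw [Finset.sum_eq_single (wordWeight u)]
  · have : cut wordWeight (swap u v) (wordWeight u) = swap u v := by
      ext1 x
      rw [cut_apply _ _ hc]
      split_ifs with hx
      · rfl
      · rw [swap_apply_of_ne_of_ne]
        · rintro rfl; exact hx rfl
        · rintro rfl; exact hx h.symm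
    rw [this, Perm.sign_swap huv, par_neg_one, one_mul]
  · intro c _ hne
    have : cut wordWeight (swap u v) c = 1 := by
      ext1 x
      rw [cut_apply _ _ hc]
      split_ifs with hx
      · rw [swap_apply_of_ne_of_ne]
        · rfl
        · rintro rfl; exact hne hx.symm
        · rintro rfl; exact hne (hx.symm.trans h.symm)
      · rfl
    rw [this, map_one, par_one, zero_mul]
  · intro hn
    exact absurd (Finset.mem_image_of_mem _ (Finset.mem_univ u)) hn

/-- Split the coordinates into those outside and those inside the range of `ι`. -/
noncomputable def idx {m n : ℕ} (ι : Fin m ↪ Fin n) :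
    {k : Fin n // ¬ ∃ j, ι j = k} ⊕ Fin m ≃ Fin n :=
  Equiv.ofBijective (Sum.elim Subtype.val ι) (by
    constructor
    · rintro (⟨x, hx⟩ | x) (⟨y, hy⟩ | y) h
      · simpa using h
      · exact absurd ⟨y, h.symm⟩ hx
      · exact absurd ⟨x, h⟩ hy
      · exact congrArg _ (ι.injective h)
    · intro k
      by_cases h : ∃ j, ι j = k
      · obtain ⟨j, rfl⟩ := h; exact ⟨Sum.inr j, rfl⟩
      · exact ⟨Sum.inl ⟨k, h⟩, rfl⟩)

/-- Split words accordingly. -/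
noncomputable def spl {m n : ℕ} (ι : Fin m ↪ Fin n) :
    (Fin n → A) ≃ ({k : Fin n // ¬ ∃ j, ι j = k} → A) × (Fin m → A) :=
  (Equiv.arrowCongr (idx ι).symm (Equiv.refl A)).trans (Equiv.sumArrowEquivProdArrow _ _ _)

lemma spl_apply {m n : ℕ} (ι : Fin m ↪ Fin n) (x : Fin n → A) :
    spl ι x = (fun k => x k.1, x ∘ ι) := rfl

lemma wt_spl {m n : ℕ} (ι : Fin m ↪ Fin n) (x : Fin n → A) :
    wordWeight x = wt (fun k : {k : Fin n // ¬ ∃ j, ι j = k} => x k) + wordWeight (x ∘ ι) := by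
  have h1 : wordWeight x = wt (x ∘ idx ι) := by
    unfold wordWeight wt
    rw [← Multiset.map_map]
    congr 1
    have := congrArg Finset.val (Finset.map_univ_equiv (idx ι))
    simpa using this.symm
  rw [h1]
  unfold wt wordWeight
  rw [← Finset.univ_disjSum_univ]
  simp [Finset.disjSum, Multiset.disjSum]
  rfl

lemma spl_applyAlong {m n : ℕ} (ι : Fin m ↪ Fin n) (g : Perm (Fin m → A)) (x : Fin n → A) :
    spl ι (applyAlong g ι x) = ((spl ι x).1, g (spl ι x).2) := by
  rw [spl_apply, spl_apply]
  refine Prod.ext ?_ ?_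
  · funext k
    exact dif_neg k.2
  · exact extWord_comp ι g x

lemma cons_applyAlong {m n : ℕ} (ι : Fin m ↪ Fin n) (g : Perm (Fin m → A))
    (hg : IsConservative g) : IsConservative (applyAlong g ι) := by
  intro x
  have h := spl_applyAlong ι g x
  rw [spl_apply, spl_apply, Prod.mk.injEq] at h
  rw [wt_spl ι, wt_spl ι x, h.1, h.2]
  simp only [hg _]

lemma chi_applyAlong {m n : ℕ} (q : A → (ZMod 2)[X]) (ι : Fin m ↪ Fin n) (g : Perm (Fin m → A))
    (hg : IsConservative g) :
    chi q (applyAlong g ι) = chi q g * (∑ a, q a) ^ (n - m) := by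
  have hG := cons_applyAlong ι g hg
  have hcut : ∀ c, Perm.sign (cut wordWeight (applyAlong g ι) c) =
      ∏ y : {k : Fin n // ¬ ∃ j, ι j = k} → A,
        Perm.sign (cut (fun u => wt y + wordWeight u) g c) := by
    intro c
    rw [← Perm.sign_prodCongrRight, ← Perm.sign_permCongr (spl ι)]
    congr 1
    ext1 z
    obtain ⟨x, rfl⟩ := (spl ι).surjective z
    have hw : wordWeight x = wt (spl ι x).1 + wordWeight (spl ι x).2 := wt_spl ι x
    rw [Equiv.permCongr_apply, Equiv.symm_apply_apply, cut_apply _ _ hG, hw,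
      Equiv.prodCongrRight_apply, cut_apply _ _ (fun u => by simp only [hg u])]
    by_cases hx : wt (spl ι x).1 + wordWeight (spl ι x).2 = c
    · rw [if_pos hx, if_pos hx, spl_applyAlong]
    · rw [if_neg hx, if_neg hx]
  have hcard : Fintype.card {k : Fin n // ¬ ∃ j, ι j = k} = n - m := by
    have := Fintype.card_congr (idx ι)
    rw [Fintype.card_sum, Fintype.card_fin, Fintype.card_fin] at this
    omega
  unfold chi
  simp_rw [hcut, par_prod, Finset.sum_mul]
  rw [Finset.sum_comm]
  have hin : ∀ y : {k : Fin n // ¬ ∃ j, ι j = k} → A,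
      ∑ c ∈ Finset.univ.image (wordWeight : (Fin n → A) → Multiset A),
        par (Perm.sign (cut (fun u => wt y + wordWeight u) g c)) * phi q c
      = ∑ d ∈ Finset.univ.image (wordWeight : (Fin m → A) → Multiset A),
        par (Perm.sign (cut wordWeight g d)) * phi q d * phi q (wt y) := by
    intro y
    have hinv : ∀ u, wt y + wordWeight (g u) = wt y + wordWeight u := fun u => by rw [hg u]
    rw [← Finset.sum_subset
      (s₁ := (Finset.univ.image (wordWeight : (Fin m → A) → Multiset A)).image (wt y + ·))]
    · rw [Finset.sum_image (fun a _ b _ h => add_left_cancel h)]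
      refine Finset.sum_congr rfl fun d _ => ?_
      have : cut (fun u => wt y + wordWeight u) g (wt y + d) = cut wordWeight g d := by
        ext1 u
        rw [cut_apply _ _ hinv, cut_apply _ _ hg]
        by_cases hu : wordWeight u = d <;> simp [hu]
      rw [this, phi_add]
      ring
    · intro c hc
      simp only [Finset.mem_image, Finset.mem_univ, true_and, exists_exists_eq_and] at hc ⊢
      obtain ⟨u, rfl⟩ := hc
      refine ⟨(spl ι).symm (y, u), ?_⟩
      have h := spl_apply ι ((spl ι).symm (y, u))
      rw [Equiv.apply_symm_apply, Prod.mk.injEq] at h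
      rw [wt_spl ι, ← h.1, ← h.2]
    · intro c _ hc
      have : cut (fun u => wt y + wordWeight u) g c = 1 := by
        ext1 u
        rw [cut_apply _ _ hinv, if_neg]
        · rfl
        · rintro rfl
          exact hc (by simp)
      rw [this, map_one, par_one, zero_mul]
  simp_rw [hin]
  rw [← hcard, ← sum_phi_wt, Finset.sum_comm]
  simp_rw [Finset.mul_sum]

end

theorem main_aux {A : Type*} [Fintype A] [DecidableEq A] (hA : 1 < Fintype.card A)
    (N : ℕ) (m : Fin N → ℕ) (g : ∀ i : Fin N, Equiv.Perm (Fin (m i) → A))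
    (hg : ∀ i : Fin N, IsConservative (g i)) :
    ∃ (n : ℕ) (f : Equiv.Perm (Fin n → A)), IsConservative f ∧
      ∀ k : ℕ, applyAlong f (Fin.castAddEmb k) ∉ Subgroup.closure
        {σ : Equiv.Perm (Fin (n + k) → A) |
          ∃ (i : Fin N) (ι : Fin (m i) ↪ Fin (n + k)), σ = applyAlong (g i) ι} := by
  classical

  obtain ⟨a, b, hab⟩ := Fintype.exists_pair_of_one_lt_card hA
  let q : A → (ZMod 2)[X] := fun x => if x = a then 1 else if x = b then 1 + X else 0
  have hqa : q a = 1 := by simp [q]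
  have hqb : q b = 1 + X := by simp [q, hab.symm]
  have hsum : ∑ x, q x = X := by
    have h : ∑ x, q x = q a + q b := by
      refine Finset.sum_eq_add a b hab ?_ ?_ ?_
      · intro c _ hc
        simp [q, hc.1, hc.2]
      · simp
      · simp
    rw [h, hqa, hqb, ← add_assoc, two_zero, zero_add]
  let n : ℕ := (∑ i, m i) + 2
  have hmn : ∀ i, m i < n := fun i => by
    have := Finset.single_le_sum (f := m) (fun _ _ => Nat.zero_le _) (Finset.mem_univ i)
    simp only [n]; omega
  let u : Fin n → A := fun i => if i = 0 then b else a
  let v : Fin n → A := u ∘ Equiv.swap 0 1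
  have h01 : (1 : Fin n) ≠ 0 := by simp [n, Fin.ext_iff]
  have huv : u ≠ v := by
    intro h
    have := congrFun h 0
    simp [u, v, h01] at this
    exact hab this.symm
  have hw : wordWeight u = wordWeight v := by
    unfold wordWeight
    simp only [v]
    rw [← Multiset.map_map]
    congr 1
    have := congrArg Finset.val (Finset.map_univ_equiv (Equiv.swap (0 : Fin n) 1))
    simpa using this.symm
  obtain ⟨hc, hchi⟩ := chi_swap q u v huv hw
  refine ⟨n, Equiv.swap u v, hc, fun k hk => ?_⟩
  have key : ∀ σ ∈ Subgroup.closure {σ : Equiv.Perm (Fin (n + k) → A) |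
      ∃ (i : Fin N) (ι : Fin (m i) ↪ Fin (n + k)), σ = applyAlong (g i) ι},
      IsConservative σ ∧ (X : (ZMod 2)[X]) ^ (k + 1) ∣ chi q σ := by
    intro σ hσ
    induction hσ using Subgroup.closure_induction with
    | mem σ h =>
      obtain ⟨i, ι, rfl⟩ := h
      refine ⟨cons_applyAlong ι _ (hg i), ?_⟩
      rw [chi_applyAlong q ι _ (hg i), hsum]
      exact Dvd.dvd.mul_left (pow_dvd_pow _ (by have := hmn i; omega)) _
    | one => exact ⟨fun _ => rfl, by simp [chi_one]⟩
    | mul x y _ _ hx hy =>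
      refine ⟨fun w => ?_, ?_⟩
      · rw [Equiv.Perm.mul_apply, hx.1, hy.1]
      · rw [chi_mul q x y hx.1 hy.1]
        exact dvd_add hx.2 hy.2
    | inv x _ hx =>
      have hi : IsConservative x⁻¹ := fun w => by
        have := hx.1 (x⁻¹ w)
        have h' : x (x⁻¹ w) = w := x.apply_symm_apply w
        rw [h'] at this
        exact this.symm
      refine ⟨hi, ?_⟩
      have h := chi_mul q x x⁻¹ hx.1 hi
      rw [mul_inv_cancel, chi_one] at h
      rw [← neg_eq_of_add_eq_zero_right h.symm]
      exact (dvd_neg).2 hx.2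
  have h := (key _ hk).2
  rw [chi_applyAlong q _ _ hc, hsum, hchi, Nat.add_sub_cancel_left, pow_succ', 
    mul_dvd_mul_iff_right (pow_ne_zero _ X_ne_zero), X_dvd_iff, coeff_zero_eq_eval_zero] at h
  have h2 : phi q (wordWeight u) = ∏ i, q (u i) := phi_wt q u
  rw [h2, eval_prod, Finset.prod_eq_one] at h
  · exact one_ne_zero h
  · intro i _
    simp only [u]
    split_ifs
    · simp [hqb]
    · simp [hqa]

end ConsNFG


/-- **The conservative revital is not finitely generated, even with borrowed symbols**
(Theorem 16 of the paper).  Let `A` be a finite type with at least two elements.  For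
every finite family `g i` (for `i : Fin N`) of conservative gates, where `g i` is a
conservative permutation of `Fin (m i) → A`, there are `n : ℕ` and a conservative
permutation `f` of `Fin n → A` such that for every `k ≥ 0` the permutation `f ⊕ id_k`
of `Fin (n + k) → A` — acting as `f` on the first `n` coordinates and fixing the
remaining `k` coordinates — does not lie in the subgroup of `Perm (Fin (n+k) → A)`
generated by the applications of the gates `g i` along injections
`Fin (m i) ↪ Fin (n + k)`. -/
theorem conservative_not_finitely_generated_with_borrowed_symbols
    {A : Type*} [Fintype A] [DecidableEq A] (hA : 1 < Fintype.card A)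
    (N : ℕ) (m : Fin N → ℕ) (g : ∀ i : Fin N, Equiv.Perm (Fin (m i) → A))
    (hg : ∀ i : Fin N, IsConservative (g i)) :
    ∃ (n : ℕ) (f : Equiv.Perm (Fin n → A)), IsConservative f ∧
      ∀ k : ℕ, applyAlong f (Fin.castAddEmb k) ∉ Subgroup.closure
        {σ : Equiv.Perm (Fin (n + k) → A) |
          ∃ (i : Fin N) (ι : Fin (m i) ↪ Fin (n + k)), σ = applyAlong (g i) ι} := by
  exact ConsNFG.main_aux hA N m g hg
end
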